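/- arXiv:2204.02288 — 6 statements merged into one kernel-verified Lean document; each statement's English description precedes it below -/
import Mathlib

section
/- Let N ≥ 2 and let S₁,…,S_N : ℝ^{2n} → ℝ be C¹ functions with ‖∇S_j(x)‖ ≤ T for all x ∈ ℝ^{2n} and all j. Then at every point of ℝ^{2n} × (ℝ^n)^{2(N−1)}, the Euclidean norm of the partial gradient of S′ − 𝒬 with respect to the fiber variables ξ = (ξ₁⁻,…,ξ_{N−1}⁻, ξ₁⁺,…,ξ_{N−1}⁺) is at most √2 · T · ((N−1) + Σ_{j=1}^{N−1} √j); in particular S′ is asymptotically quadratic at infinity. -/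
/-!
In the difference `S′ − 𝒬` only the terms `S_j` survive. Writing `a_j`, `b_j` for the two partial
gradients of `S_j` at its argument and `A_k = ∑_{j ≤ k} a_j`, the chain rule gives
`∇_{ξ_k^∓} (S′ − 𝒬) = ± A_k + b_{k+1}` (`hasGradientAt_comp_affine` and the two lemmas `gradient_minus`,
`gradient_plus`). By the parallelogram law the squared norm of the fiber gradient is
`2 ∑_k (‖A_k‖² + ‖b_{k+1}‖²)`. Since `‖a_j‖, ‖b_j‖ ≤ T`, this is at most
`2 T² (∑_k k² + (N − 1))`, and the claim follows from the elementary inequality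
`∑_{k ≤ m} k² ≤ (∑_{k ≤ m} √k)²` (`sum_sq_le_sq_sum_sqrt`).
-/

noncomputable section

/-- `ℝ^n` with the Euclidean structure. -/
abbrev Vn (n : ℕ) := EuclideanSpace ℝ (Fin n)

/-- Extension of a family `ξ₁,…,ξ_{N−1}` of vectors by `0` for all other indices
(one-based indexing, with the convention `ξ₀ = ξ_N = 0`). -/
def extFib (n N : ℕ) (ξ : Fin (N - 1) → Vn n) : ℕ → Vn n :=
  fun k => if h : 1 ≤ k ∧ k ≤ N - 1 then ξ ⟨k - 1, by omega⟩ else 0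

/-- The fiberwise quadratic form `𝒬(ξ) = −Σ_{j=1}^{N−1} |ξ_j⁻|² + Σ_{j=1}^{N−1} |ξ_j⁺|²`. -/
def QuadForm (n N : ℕ) (ξm ξp : Fin (N - 1) → Vn n) : ℝ :=
  -(∑ j, ‖ξm j‖ ^ 2) + ∑ j, ‖ξp j‖ ^ 2

/-- The composed generating function
`S′(q_N, p₀; ξ⁻, ξ⁺) = Σ_{j=1}^N S_j(q̃_j, p̃_{j−1}) + 𝒬(ξ)` where
`q̃_j = q_N + Σ_{k=j}^{N} ξ_k⁻ − Σ_{k=j}^{N} ξ_k⁺` and `p̃_{j−1} = p₀ + ξ_{j−1}⁻ + ξ_{j−1}⁺`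
(with `ξ₀^± = ξ_N^± = 0`). -/
def Sprime (n N : ℕ) (S : ℕ → Vn n × Vn n → ℝ)
    (x : Vn n × Vn n) (ξm ξp : Fin (N - 1) → Vn n) : ℝ :=
  (∑ j ∈ Finset.Icc 1 N,
      S j (x.1 + (∑ k ∈ Finset.Icc j N, extFib n N ξm k)
              - ∑ k ∈ Finset.Icc j N, extFib n N ξp k,
           x.2 + extFib n N ξm (j - 1) + extFib n N ξp (j - 1)))
    + QuadForm n N ξm ξp

theorem extFib_update (n N : ℕ) (ξ : Fin (N - 1) → Vn n) (i : Fin (N - 1)) (v : Vn n) (k : ℕ) :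
    extFib n N (Function.update ξ i v) k
      = extFib n N ξ k + (if k = i + 1 then (1 : ℝ) else 0) • (v - ξ i) := by
  have hi := i.2
  unfold extFib
  by_cases hk : k = i + 1
  · subst hk
    have h : 1 ≤ (i : ℕ) + 1 ∧ (i : ℕ) + 1 ≤ N - 1 := by omega
    simp [h]
  · by_cases h : 1 ≤ k ∧ k ≤ N - 1
    · have : (⟨k - 1, by omega⟩ : Fin (N - 1)) ≠ i := by
        intro he
        have := congrArg Fin.val he
        simp only at this
        omega
      simp [h, hk, Function.update_of_ne this]
    · simp [h, hk]

theorem sum_extFib_update (n N : ℕ) (ξ : Fin (N - 1) → Vn n) (i : Fin (N - 1)) (v : Vn n) (j : ℕ) :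
    ∑ k ∈ Finset.Icc j N, extFib n N (Function.update ξ i v) k
      = (∑ k ∈ Finset.Icc j N, extFib n N ξ k)
        + (if j ≤ i + 1 then (1 : ℝ) else 0) • (v - ξ i) := by
  have hi := i.2
  simp only [extFib_update, Finset.sum_add_distrib, ← Finset.sum_smul, Finset.sum_ite_eq',
    Finset.mem_Icc]
  have : (j ≤ (i : ℕ) + 1 ∧ (i : ℕ) + 1 ≤ N) ↔ j ≤ (i : ℕ) + 1 := by omega
  simp only [this]

/-- Chain rule along an affine map `v ↦ (c + α (v − w), d + β (v − w))`, at `v = w`, in terms of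
the partial gradients at `(c, d)`. -/
theorem hasGradientAt_comp_affine {n : ℕ} {f : Vn n × Vn n → ℝ} (hf : Differentiable ℝ f)
    (c d w : Vn n) (α β : ℝ) :
    HasGradientAt (fun v => f (c + α • (v - w), d + β • (v - w)))
      (α • gradient (fun q => f (q, d)) c + β • gradient (fun p => f (c, p)) d) w := by
  have hq : HasFDerivAt (fun q => f (q, d))
      ((fderiv ℝ f (c, d)).comp (ContinuousLinearMap.inl ℝ (Vn n) (Vn n))) c :=
    (hf (c, d)).hasFDerivAt.comp c (hasFDerivAt_prodMk_left c d)
  have hp : HasFDerivAt (fun p => f (c, p))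
      ((fderiv ℝ f (c, d)).comp (ContinuousLinearMap.inr ℝ (Vn n) (Vn n))) d :=
    (hf (c, d)).hasFDerivAt.comp d (hasFDerivAt_prodMk_right c d)
  have hl (e : Vn n) (γ : ℝ) : HasFDerivAt (fun v : Vn n => e + γ • (v - w))
      (γ • ContinuousLinearMap.id ℝ (Vn n)) w :=
    (((hasFDerivAt_id w).sub_const w).const_smul γ).const_add e
  have hpair := (hl c α).prodMk (hl d β)
  have hf' : HasFDerivAt f (fderiv ℝ f (c, d)) (c + α • (w - w), d + β • (w - w)) := by
    simpa using (hf (c, d)).hasFDerivAt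
  have hc := hf'.comp w hpair
  refine hasGradientAt_iff_hasFDerivAt.mpr (hc.congr_fderiv ?_)
  unfold gradient
  rw [hq.fderiv, hp.fderiv]
  ext v
  have hsplit : ((α • v, β • v) : Vn n × Vn n) = α • (v, 0) + β • (0, v) := by simp
  simp [hsplit, map_add, map_smul, -Prod.smul_mk, -Prod.mk_add_mk]

/-- The first argument of `S_j` in `S′`. -/
def qTilde (n N : ℕ) (x : Vn n × Vn n) (ξm ξp : Fin (N - 1) → Vn n) (j : ℕ) : Vn n :=
  x.1 + (∑ k ∈ Finset.Icc j N, extFib n N ξm k) - ∑ k ∈ Finset.Icc j N, extFib n N ξp k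

/-- The second argument of `S_j` in `S′`. -/
def pTilde (n N : ℕ) (x : Vn n × Vn n) (ξm ξp : Fin (N - 1) → Vn n) (j : ℕ) : Vn n :=
  x.2 + extFib n N ξm (j - 1) + extFib n N ξp (j - 1)

/-- The partial gradient `a_j = ∂S_j/∂q` at the argument of `S_j` in `S′`. -/
def gradQ (n N : ℕ) (S : ℕ → Vn n × Vn n → ℝ) (x : Vn n × Vn n) (ξm ξp : Fin (N - 1) → Vn n)
    (j : ℕ) : Vn n :=
  gradient (fun q => S j (q, pTilde n N x ξm ξp j)) (qTilde n N x ξm ξp j)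

/-- The partial gradient `b_j = ∂S_j/∂p` at the argument of `S_j` in `S′`. -/
def gradP (n N : ℕ) (S : ℕ → Vn n × Vn n → ℝ) (x : Vn n × Vn n) (ξm ξp : Fin (N - 1) → Vn n)
    (j : ℕ) : Vn n :=
  gradient (fun p => S j (qTilde n N x ξm ξp j, p)) (pTilde n N x ξm ξp j)

/-- Summed over `j`, the chain-rule coefficients pick out `± A_k` and `b_{k+1}`
(here `k = i + 1`, as `Fin` is zero-based). -/
theorem sum_coeff {n N : ℕ} (i : Fin (N - 1)) (ε : ℝ) (a b : ℕ → Vn n) :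
    ∑ j ∈ Finset.Icc 1 N, ((ε * if j ≤ (i : ℕ) + 1 then (1 : ℝ) else 0) • a j
        + (if j - 1 = (i : ℕ) + 1 then (1 : ℝ) else 0) • b j)
      = ε • (∑ j ∈ Finset.Icc 1 ((i : ℕ) + 1), a j) + b (i + 2) := by
  have hi := i.2
  rw [Finset.sum_add_distrib]
  congr 1
  · have : Finset.Icc 1 ((i : ℕ) + 1) = (Finset.Icc 1 N).filter (fun j => j ≤ (i : ℕ) + 1) := by
      ext j
      simp only [Finset.mem_Icc, Finset.mem_filter]
      omega
    rw [this, Finset.sum_filter, Finset.smul_sum]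
    refine Finset.sum_congr rfl fun j _ => ?_
    split_ifs <;> simp
  · rw [Finset.sum_eq_single_of_mem ((i : ℕ) + 2) (by simp only [Finset.mem_Icc]; omega)]
    · simp
    · intro j _ hj
      have : ¬ (j - 1 = (i : ℕ) + 1) := by omega
      simp [this]

theorem gradient_minus {n N : ℕ} {S : ℕ → Vn n × Vn n → ℝ}
    (hS : ∀ j ∈ Finset.Icc 1 N, Differentiable ℝ (S j))
    (x : Vn n × Vn n) (ξm ξp : Fin (N - 1) → Vn n) (i : Fin (N - 1)) :
    gradient (fun v => Sprime n N S x (Function.update ξm i v) ξp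
        - QuadForm n N (Function.update ξm i v) ξp) (ξm i)
      = (∑ j ∈ Finset.Icc 1 ((i : ℕ) + 1), gradQ n N S x ξm ξp j)
        + gradP n N S x ξm ξp (i + 2) := by
  have hsum := HasFDerivAt.fun_sum (u := Finset.Icc 1 N) fun j hj =>
    (hasGradientAt_comp_affine (hS j hj) (qTilde n N x ξm ξp j) (pTilde n N x ξm ξp j) (ξm i)
      (1 * if j ≤ (i : ℕ) + 1 then (1 : ℝ) else 0)
      (if j - 1 = (i : ℕ) + 1 then (1 : ℝ) else 0)).hasFDerivAt
  rw [← map_sum] at hsum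
  have hg := (hasGradientAt_iff_hasFDerivAt.mpr hsum).gradient
  replace hg := hg.trans (sum_coeff i 1 (gradQ n N S x ξm ξp) (gradP n N S x ξm ξp))
  rw [one_smul] at hg
  rw [← hg]
  congr 1
  ext v
  rw [Sprime, add_sub_cancel_right]
  refine Finset.sum_congr rfl fun j _ => ?_
  rw [sum_extFib_update, extFib_update, qTilde, pTilde]
  congr 2
  · module
  · module

theorem gradient_plus {n N : ℕ} {S : ℕ → Vn n × Vn n → ℝ}
    (hS : ∀ j ∈ Finset.Icc 1 N, Differentiable ℝ (S j))
    (x : Vn n × Vn n) (ξm ξp : Fin (N - 1) → Vn n) (i : Fin (N - 1)) :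
    gradient (fun v => Sprime n N S x ξm (Function.update ξp i v)
        - QuadForm n N ξm (Function.update ξp i v)) (ξp i)
      = -(∑ j ∈ Finset.Icc 1 ((i : ℕ) + 1), gradQ n N S x ξm ξp j)
        + gradP n N S x ξm ξp (i + 2) := by
  have hsum := HasFDerivAt.fun_sum (u := Finset.Icc 1 N) fun j hj =>
    (hasGradientAt_comp_affine (hS j hj) (qTilde n N x ξm ξp j) (pTilde n N x ξm ξp j) (ξp i)
      (-1 * if j ≤ (i : ℕ) + 1 then (1 : ℝ) else 0)
      (if j - 1 = (i : ℕ) + 1 then (1 : ℝ) else 0)).hasFDerivAt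
  rw [← map_sum] at hsum
  have hg := (hasGradientAt_iff_hasFDerivAt.mpr hsum).gradient
  replace hg := hg.trans (sum_coeff i (-1) (gradQ n N S x ξm ξp) (gradP n N S x ξm ξp))
  rw [neg_one_smul] at hg
  rw [← hg]
  congr 1
  ext v
  rw [Sprime, add_sub_cancel_right]
  refine Finset.sum_congr rfl fun j _ => ?_
  rw [sum_extFib_update, extFib_update, qTilde, pTilde]
  congr 2
  · module
  · module

theorem mul_sqrt_le_sum_sqrt (m : ℕ) :
    (m : ℝ) * √((m : ℝ) + 1) ≤ 2 * ∑ j ∈ Finset.Icc 1 m, √(j : ℝ) := by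
  induction m with
  | zero => simp
  | succ m ih =>
    rw [Finset.sum_Icc_succ_top (by omega)]
    push_cast
    have h1 : √((m : ℝ) + 1) ^ 2 = m + 1 := Real.sq_sqrt (by positivity)
    have h2 : √((m : ℝ) + 1 + 1) ^ 2 = m + 1 + 1 := Real.sq_sqrt (by positivity)
    have hle : √((m : ℝ) + 1) ≤ √((m : ℝ) + 1 + 1) := Real.sqrt_le_sqrt (by linarith)
    have h0 := Real.sqrt_nonneg ((m : ℝ) + 1)
    set s := √((m : ℝ) + 1)
    set t := √((m : ℝ) + 1 + 1)
    -- With `s² = m + 1` and `t² = m + 2`, the step is `s² t ≤ t² s`.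
    have hst : s ^ 2 * t ≤ t ^ 2 * s := by
      have : 0 ≤ s * t * (t - s) :=
        mul_nonneg (mul_nonneg h0 (h0.trans hle)) (sub_nonneg.mpr hle)
      nlinarith
    rw [h1, h2] at hst
    linarith

/-- In the inductive step the left side grows by `(m + 1)²` and the right side by
`2 √(m + 1) ∑_{j ≤ m} √j + (m + 1)`; these compare by `mul_sqrt_le_sum_sqrt`. -/
theorem sum_sq_le_sq_sum_sqrt (m : ℕ) :
    ∑ j ∈ Finset.Icc 1 m, (j : ℝ) ^ 2 ≤ (∑ j ∈ Finset.Icc 1 m, √(j : ℝ)) ^ 2 := by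
  induction m with
  | zero => simp
  | succ m ih =>
    have key := mul_sqrt_le_sum_sqrt m
    rw [Finset.sum_Icc_succ_top (by omega), Finset.sum_Icc_succ_top (by omega)]
    push_cast
    have h1 : √((m : ℝ) + 1) ^ 2 = m + 1 := Real.sq_sqrt (by positivity)
    have h2 := mul_le_mul_of_nonneg_right key (Real.sqrt_nonneg ((m : ℝ) + 1))
    nlinarith

/-- **The composed generating function is asymptotically quadratic at infinity**:
the Euclidean norm of the fiber-variable gradient of `S′ − 𝒬` is bounded by
`√2 · T · ((N−1) + Σ_{j=1}^{N−1} √j)` whenever each `S_j` has `‖∇S_j‖ ≤ T` everywhere. -/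
theorem Sprime_asymptotically_quadratic
    (n N : ℕ) (hN : 2 ≤ N) (T : ℝ)
    (S : ℕ → Vn n × Vn n → ℝ)
    (hS : ∀ j ∈ Finset.Icc 1 N, ContDiff ℝ 1 (S j))
    (hgrad : ∀ j ∈ Finset.Icc 1 N, ∀ x : Vn n × Vn n,
      Real.sqrt (‖gradient (fun q => S j (q, x.2)) x.1‖ ^ 2
          + ‖gradient (fun p => S j (x.1, p)) x.2‖ ^ 2) ≤ T)
    (x : Vn n × Vn n) (ξm ξp : Fin (N - 1) → Vn n) :
    Real.sqrt
      ((∑ j, ‖gradient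
          (fun v => Sprime n N S x (Function.update ξm j v) ξp
              - QuadForm n N (Function.update ξm j v) ξp) (ξm j)‖ ^ 2)
        + ∑ j, ‖gradient
          (fun v => Sprime n N S x ξm (Function.update ξp j v)
              - QuadForm n N ξm (Function.update ξp j v)) (ξp j)‖ ^ 2)
      ≤ Real.sqrt 2 * T * (((N : ℝ) - 1) + ∑ j ∈ Finset.Icc 1 (N - 1), Real.sqrt j) := by
  have hd : ∀ j ∈ Finset.Icc 1 N, Differentiable ℝ (S j) := fun j hj =>
    (hS j hj).differentiable (by norm_num)
  have hT : 0 ≤ T := (Real.sqrt_nonneg _).trans (hgrad 1 (by simp; omega) x)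
  set a := gradQ n N S x ξm ξp with ha
  set b := gradP n N S x ξm ξp with hb
  have hab : ∀ j ∈ Finset.Icc 1 N, ‖a j‖ ^ 2 + ‖b j‖ ^ 2 ≤ T ^ 2 := fun j hj =>
    (Real.sqrt_le_left hT).mp (hgrad j hj (qTilde n N x ξm ξp j, pTilde n N x ξm ξp j))
  have hbT : ∀ j ∈ Finset.Icc 1 N, ‖b j‖ ^ 2 ≤ T ^ 2 := fun j hj => by
    nlinarith [hab j hj, sq_nonneg ‖a j‖]
  have haT : ∀ j ∈ Finset.Icc 1 N, ‖a j‖ ≤ T := fun j hj =>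
    abs_le_of_sq_le_sq' (by nlinarith [hab j hj, sq_nonneg ‖b j‖]) hT |>.2
  have hA : ∀ i : Fin (N - 1),
      ‖∑ j ∈ Finset.Icc 1 ((i : ℕ) + 1), a j‖ ≤ ((i : ℕ) + 1 : ℝ) * T := fun i => by
    have hi := i.2
    refine (norm_sum_le_of_le _ (f := a) (n := fun _ => T) fun j hj => haT j ?_).trans ?_
    · simp only [Finset.mem_Icc] at hj ⊢
      omega
    · simp
  have hterm : ∀ i : Fin (N - 1),
      ‖(∑ j ∈ Finset.Icc 1 ((i : ℕ) + 1), a j) + b (i + 2)‖ ^ 2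
        + ‖-(∑ j ∈ Finset.Icc 1 ((i : ℕ) + 1), a j) + b (i + 2)‖ ^ 2
      ≤ 2 * T ^ 2 * ((((i : ℕ) + 1 : ℕ) : ℝ) ^ 2 + 1) := fun i => by
    have hi := i.2
    have hp := parallelogram_law_with_norm ℝ (b (i + 2))
      (∑ j ∈ Finset.Icc 1 ((i : ℕ) + 1), a j)
    have h1 := pow_le_pow_left₀ (norm_nonneg _) (hA i) 2
    have h2 := hbT (i + 2) (by simp only [Finset.mem_Icc]; omega)
    rw [add_comm _ (b _), neg_add_eq_sub]
    push_cast
    nlinarith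
  have hN1 : (1 : ℝ) ≤ (N : ℝ) - 1 := by
    have : (2 : ℝ) ≤ N := by exact_mod_cast hN
    linarith
  have hσ : 0 ≤ ∑ j ∈ Finset.Icc 1 (N - 1), √(j : ℝ) :=
    Finset.sum_nonneg fun _ _ => Real.sqrt_nonneg _
  have hsumsq : ∑ i : Fin (N - 1), ((((i : ℕ) + 1 : ℕ) : ℝ) ^ 2 + 1)
      = ∑ j ∈ Finset.Icc 1 (N - 1), (j : ℝ) ^ 2 + ((N : ℝ) - 1) := by
    rw [Finset.sum_add_distrib, Fin.sum_univ_eq_sum_range (fun i => ((i + 1 : ℕ) : ℝ) ^ 2),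
      Finset.range_eq_Ico, Finset.sum_Ico_add' (fun i : ℕ => (i : ℝ) ^ 2)]
    congr 1
    simp [Nat.cast_sub (show 1 ≤ N by omega)]
  have hkey := sum_sq_le_sq_sum_sqrt (N - 1)
  simp only [gradient_minus hd, gradient_plus hd, ← ha, ← hb]
  rw [← Finset.sum_add_distrib]
  refine Real.sqrt_le_iff.mpr ⟨by positivity, ?_⟩
  refine (Finset.sum_le_sum fun i _ => hterm i).trans ?_
  rw [← Finset.mul_sum, hsumsq, mul_pow, mul_pow, Real.sq_sqrt zero_le_two]
  gcongr
  nlinarith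
end
end

section
/- Let 0 ≤ i ≤ d, 𝒬(ξ) = −Σ_{j=1}^{i} ξ_j² + Σ_{j=i+1}^{d} ξ_j² on ℝ^d, let R_f > 0, and let μ : [0,∞) → ℝ be a smooth function satisfying μ(s) = μ₀ for s ≤ R_f² where μ₀ > 2R_f², μ(s) = 0 for s ≥ 5R_f², and −1 < μ′(s) ≤ 0 for all s. Set F(ξ) = 𝒬(ξ) − μ(‖ξ‖²) and a = −R_f². Then for every real b ≥ a, the sublevel set {F ≤ a} is a strong deformation retract of {F ≤ b}: there is a continuous H : [0,1] × {F ≤ b} → {F ≤ b} with H(0,·) = id, H(1, ·) taking values in {F ≤ a}, and H(t, z) = z for all t and all z ∈ {F ≤ a}. -/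
/-!
Split `ξ = (x, y)` into its first `i` and its remaining coordinates and put `u = ‖x‖²`, `v = ‖y‖²`,
so that `F = v - u - μ (u + v)`. Since `μ` is antitone, `F` is strictly increasing in `v`; since
`s + μ s` is monotone, `F ≤ -μ₀ < a` on `v = 0`. Hence `{F ≤ a}` is a region `{v ≤ V u}` under the
graph of a positive continuous function `V` (`exists_height`), and a straight-line homotopy shrinking
`y` until `v ≤ V u` is the required deformation. The height is
explicit: with `w = u + v`, the equation `F = a` reads `w - μ w = a + 2u`, and `w ↦ w - μ w` is an
increasing homeomorphism of `ℝ`.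
-/

noncomputable section

/-- The diagonal quadratic form `𝒬(ξ) = −Σ_{j=1}^{i} ξ_j² + Σ_{j=i+1}^{d} ξ_j²` on `ℝ^d`. -/
def Qdiag (d i : ℕ) (η : EuclideanSpace ℝ (Fin d)) : ℝ :=
  ∑ j : Fin d, if (j : ℕ) < i then -(η j ^ 2) else η j ^ 2

/-- The perturbed function `F(ξ) = 𝒬(ξ) − μ(‖ξ‖²)`. -/
def Fmu (d i : ℕ) (μ : ℝ → ℝ) (η : EuclideanSpace ℝ (Fin d)) : ℝ :=
  Qdiag d i η - μ (‖η‖ ^ 2)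

/-- The squared norm of the negative part: `∑_{j ≤ i} ξ_j²`. -/
def negSq (d i : ℕ) (η : EuclideanSpace ℝ (Fin d)) : ℝ :=
  ∑ j : Fin d, if (j : ℕ) < i then η j ^ 2 else 0

/-- The squared norm of the positive part: `∑_{j > i} ξ_j²`. -/
def posSq (d i : ℕ) (η : EuclideanSpace ℝ (Fin d)) : ℝ :=
  ∑ j : Fin d, if (j : ℕ) < i then 0 else η j ^ 2

/-- The map `(x, y) ↦ (x, c y)` that rescales the positive part only. -/
def scalePos (d i : ℕ) (c : ℝ) (η : EuclideanSpace ℝ (Fin d)) : EuclideanSpace ℝ (Fin d) :=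
  WithLp.toLp 2 fun j : Fin d => if (j : ℕ) < i then η j else c * η j

lemma negSq_nonneg (d i : ℕ) (η : EuclideanSpace ℝ (Fin d)) : 0 ≤ negSq d i η :=
  Finset.sum_nonneg fun j _ => by split_ifs <;> positivity

lemma posSq_nonneg (d i : ℕ) (η : EuclideanSpace ℝ (Fin d)) : 0 ≤ posSq d i η :=
  Finset.sum_nonneg fun j _ => by split_ifs <;> positivity

lemma continuous_negSq (d i : ℕ) : Continuous (negSq d i) := by
  unfold negSq
  refine continuous_finsetSum _ fun j _ => ?_
  split_ifs <;> fun_prop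

lemma continuous_posSq (d i : ℕ) : Continuous (posSq d i) := by
  unfold posSq
  refine continuous_finsetSum _ fun j _ => ?_
  split_ifs <;> fun_prop

lemma Fmu_eq (d i : ℕ) (μ : ℝ → ℝ) (η : EuclideanSpace ℝ (Fin d)) :
    Fmu d i μ η = posSq d i η - negSq d i η - μ (negSq d i η + posSq d i η) := by
  have hQ : Qdiag d i η = posSq d i η - negSq d i η := by
    unfold Qdiag posSq negSq
    rw [← Finset.sum_sub_distrib]
    refine Finset.sum_congr rfl fun j _ => ?_
    split_ifs <;> ring
  have hN : ‖η‖ ^ 2 = negSq d i η + posSq d i η := by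
    unfold posSq negSq
    rw [EuclideanSpace.real_norm_sq_eq, ← Finset.sum_add_distrib]
    refine Finset.sum_congr rfl fun j _ => ?_
    split_ifs <;> ring
  rw [Fmu, hQ, hN]

lemma negSq_scalePos (d i : ℕ) (c : ℝ) (η : EuclideanSpace ℝ (Fin d)) :
    negSq d i (scalePos d i c η) = negSq d i η := by
  unfold negSq scalePos
  refine Finset.sum_congr rfl fun j _ => ?_
  split_ifs with h <;> simp [h]

lemma posSq_scalePos (d i : ℕ) (c : ℝ) (η : EuclideanSpace ℝ (Fin d)) :
    posSq d i (scalePos d i c η) = c ^ 2 * posSq d i η := by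
  unfold posSq scalePos
  rw [Finset.mul_sum]
  refine Finset.sum_congr rfl fun j _ => ?_
  split_ifs with h <;> simp [h, mul_pow]

lemma scalePos_one (d i : ℕ) (η : EuclideanSpace ℝ (Fin d)) : scalePos d i 1 η = η := by
  ext j
  simp [scalePos]

lemma continuous_scalePos (d i : ℕ) :
    Continuous fun p : ℝ × EuclideanSpace ℝ (Fin d) => scalePos d i p.1 p.2 := by
  unfold scalePos
  refine (PiLp.continuous_toLp 2 _).comp (continuous_pi fun j => ?_)
  split_ifs <;> fun_prop

/-- In the `(u, v)`-plane the sublevel set `{F ≤ a}` is, over `u ≥ 0`, the region below the graph of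
a positive continuous function. -/
lemma exists_height (Rf : ℝ) (hRf : 0 < Rf)
    (μ : ℝ → ℝ) (hμ : Differentiable ℝ μ)
    (μ₀ : ℝ) (hμ₀ : 2 * Rf ^ 2 < μ₀)
    (hμconst : ∀ s : ℝ, s ≤ Rf ^ 2 → μ s = μ₀)
    (hμzero : ∀ s : ℝ, 5 * Rf ^ 2 ≤ s → μ s = 0)
    (hanti : Antitone μ) (hμ' : ∀ s : ℝ, -1 < deriv μ s) :
    ∃ V : ℝ → ℝ, Continuous V ∧ (∀ u, 0 ≤ u → 0 < V u) ∧
      ∀ u v, v - u - μ (u + v) ≤ -Rf ^ 2 ↔ v ≤ V u := by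
  have hmono : StrictMono fun w => w - μ w := fun x y hxy => by
    have := hanti hxy.le
    dsimp only
    linarith
  have hsurj : Function.Surjective fun w => w - μ w := by
    refine Continuous.surjective (continuous_id.sub hμ.continuous) ?_ ?_
    · refine Filter.tendsto_id.congr' ?_
      filter_upwards [Filter.eventually_ge_atTop (5 * Rf ^ 2)] with w hw
      simp [hμzero w hw]
    · refine (Filter.tendsto_atBot_add_const_right _ (-μ₀) Filter.tendsto_id).congr' ?_
      filter_upwards [Filter.eventually_le_atBot (Rf ^ 2)] with w hw
      simp [hμconst w hw, sub_eq_add_neg]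
  let e : ℝ ≃o ℝ := hmono.orderIsoOfSurjective _ hsurj
  have he : ∀ w, e w = w - μ w := fun w => rfl
  have hshift : Monotone fun s => s + μ s := by
    refine monotone_of_deriv_nonneg (differentiable_id.add hμ) fun s => ?_
    have : HasDerivAt (fun s => s + μ s) (1 + deriv μ s) s :=
      (hasDerivAt_id s).add (hμ s).hasDerivAt
    rw [this.deriv]
    linarith [hμ' s]
  refine ⟨fun u => e.symm (-Rf ^ 2 + 2 * u) - u, ?_, fun u hu => ?_, fun u v => ?_⟩
  · have := e.symm.continuous
    fun_prop
  · have h0 := hshift hu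
    have h1 := hμconst 0 (by positivity)
    have h2 : u < e.symm (-Rf ^ 2 + 2 * u) := by
      rw [e.lt_symm_apply, he]
      dsimp only at h0
      nlinarith
    linarith
  · rw [le_sub_iff_add_le, e.le_symm_apply, he, add_comm v u]
    constructor <;> intro h <;> linarith

/-- **`{F ≤ a}` is a strong deformation retract of `{F ≤ b}` for `a = −R_f²` and any
`b ≥ a`**, where `F(ξ) = 𝒬(ξ) − μ(‖ξ‖²)` for a smooth bump `μ` which equals
`μ₀ > 2R_f²` on `(-∞, R_f²]`, vanishes on `[5R_f², ∞)`, and has `−1 < μ′ ≤ 0`. -/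
theorem Fmu_sublevel_strong_deformation_retract
    (d i : ℕ) (hi : i ≤ d) (Rf : ℝ) (hRf : 0 < Rf)
    (μ : ℝ → ℝ) (hμ : ContDiff ℝ (⊤ : ℕ∞) μ)
    (μ₀ : ℝ) (hμ₀ : 2 * Rf ^ 2 < μ₀)
    (hμconst : ∀ s : ℝ, s ≤ Rf ^ 2 → μ s = μ₀)
    (hμzero : ∀ s : ℝ, 5 * Rf ^ 2 ≤ s → μ s = 0)
    (hμ' : ∀ s : ℝ, -1 < deriv μ s ∧ deriv μ s ≤ 0)
    (b : ℝ) (hb : -Rf ^ 2 ≤ b) :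
    ∃ H : ℝ × EuclideanSpace ℝ (Fin d) → EuclideanSpace ℝ (Fin d),
      ContinuousOn H (Set.Icc (0 : ℝ) 1 ×ˢ {ξ | Fmu d i μ ξ ≤ b}) ∧
      (∀ t ∈ Set.Icc (0 : ℝ) 1, ∀ ξ, Fmu d i μ ξ ≤ b → Fmu d i μ (H (t, ξ)) ≤ b) ∧
      (∀ ξ, Fmu d i μ ξ ≤ b → H (0, ξ) = ξ) ∧
      (∀ ξ, Fmu d i μ ξ ≤ b → Fmu d i μ (H (1, ξ)) ≤ -Rf ^ 2) ∧
      (∀ t ∈ Set.Icc (0 : ℝ) 1, ∀ ξ, Fmu d i μ ξ ≤ -Rf ^ 2 → H (t, ξ) = ξ) := by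
  have hdiff : Differentiable ℝ μ := hμ.differentiable (by simp)
  have hanti : Antitone μ := antitone_of_deriv_nonpos hdiff fun s => (hμ' s).2
  obtain ⟨V, hVc, hVpos, hV⟩ := exists_height Rf hRf μ hdiff μ₀ hμ₀ hμconst hμzero hanti
    fun s => (hμ' s).1
  -- `σ² v = min v (V u)`; taking the maximum in the denominator keeps `σ` continuous where `v = 0`.
  let σ : EuclideanSpace ℝ (Fin d) → ℝ := fun ξ =>
    √(V (negSq d i ξ) / max (posSq d i ξ) (V (negSq d i ξ)))
  have hVn : ∀ ξ, 0 < V (negSq d i ξ) := fun ξ => hVpos _ (negSq_nonneg d i ξ)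
  have hmax : ∀ ξ, 0 < max (posSq d i ξ) (V (negSq d i ξ)) := fun ξ => lt_max_of_lt_right (hVn ξ)
  have hσc : Continuous σ := by
    have h1 := hVc.comp (continuous_negSq d i)
    exact (h1.div ((continuous_posSq d i).max h1) fun ξ => (hmax ξ).ne').sqrt
  have hσ0 : ∀ ξ, 0 ≤ σ ξ := fun ξ => Real.sqrt_nonneg _
  have hσ1 : ∀ ξ, σ ξ ≤ 1 := fun ξ =>
    Real.sqrt_le_one.mpr ((div_le_one (hmax ξ)).mpr (le_max_right _ _))
  have hsub : ∀ ξ, Fmu d i μ ξ ≤ -Rf ^ 2 ↔ posSq d i ξ ≤ V (negSq d i ξ) := fun ξ => by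
    rw [Fmu_eq, hV]
  refine ⟨fun p => scalePos d i (1 - p.1 + p.1 * σ p.2) p.2, Continuous.continuousOn ?_, ?_, ?_, ?_,
    ?_⟩
  · have hc : Continuous fun p : ℝ × EuclideanSpace ℝ (Fin d) => 1 - p.1 + p.1 * σ p.2 := by
      fun_prop
    exact (continuous_scalePos d i).comp (hc.prodMk continuous_snd)
  · rintro t ⟨ht0, ht1⟩ ξ hξ
    refine le_trans ?_ hξ
    have hc0 : 0 ≤ 1 - t + t * σ ξ := by nlinarith [mul_nonneg ht0 (hσ0 ξ)]
    have hc1 : 1 - t + t * σ ξ ≤ 1 := by nlinarith [hσ1 ξ]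
    have hle : (1 - t + t * σ ξ) ^ 2 * posSq d i ξ ≤ posSq d i ξ :=
      mul_le_of_le_one_left (posSq_nonneg d i ξ) (pow_le_one₀ hc0 hc1)
    dsimp only
    rw [Fmu_eq, Fmu_eq, negSq_scalePos, posSq_scalePos]
    have := hanti (add_le_add_right hle (negSq d i ξ))
    linarith
  · intro ξ _
    simp [scalePos_one]
  · intro ξ _
    rw [hsub, negSq_scalePos, posSq_scalePos]
    have hsq : σ ξ ^ 2 = V (negSq d i ξ) / max (posSq d i ξ) (V (negSq d i ξ)) :=
      Real.sq_sqrt (div_pos (hVn ξ) (hmax ξ)).le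
    simp only [sub_self, zero_add, one_mul]
    rw [hsq, div_mul_eq_mul_div, div_le_iff₀ (hmax ξ)]
    exact mul_le_mul_of_nonneg_left (le_max_left _ _) (hVn ξ).le
  · intro t _ ξ hξ
    have : σ ξ = 1 := by
      simp only [σ]
      rw [max_eq_right ((hsub ξ).mp hξ), div_self (hVn ξ).ne', Real.sqrt_one]
    simp [this, scalePos_one]
end
end

section
/- (Pairing lemma.) Let n ∈ ℕ and let D, V₁, V₂ be n×n matrices over the field 𝔽₂ = ℤ/2, with V₁ and V₂ invertible and upper triangular. Set R₁ = D·V₁ and R₂ = D·V₂, and suppose both R₁ and R₂ are reduced. Then for every column index j: the j-th column of R₁ is zero if and only if the j-th column of R₂ is zero, and if both are nonzero then Pivot(R₁, j) = Pivot(R₂, j). In other words, the pivot pairing obtained from a reduced form of D by left-to-right column operations does not depend on the reduction. -/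
/-!
Write `R₂ = R₁ * U` with `U = V₁⁻¹ * V₂`, which is upper triangular and invertible, so its diagonal
entries are nonzero. In a reduced matrix the pivots of distinct nonzero columns are distinct, so no
cancellation can occur at the largest pivot in a linear combination of columns. Hence column `j` of
`R₁ * U`, to which column `j` of `R₁` contributes, has pivot at least that of column `j` of `R₁`
(`pivotCol_le_mul`). Exchanging the roles of `R₁` and `R₂` gives the opposite inequality.
-/

noncomputable section

/-- The pivot index of column `j` of a matrix over `𝔽₂ = ZMod 2`: the largest row
index `i` with `R i j ≠ 0` (or `⊥` if the column is zero). -/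
def pivotCol {m : ℕ} (R : Matrix (Fin m) (Fin m) (ZMod 2)) (j : Fin m) : WithBot (Fin m) :=
  (Finset.univ.filter fun i => R i j ≠ 0).max

/-- A matrix over `𝔽₂` is reduced if no two distinct nonzero columns share the same
pivot index. -/
def IsReducedMat {m : ℕ} (R : Matrix (Fin m) (Fin m) (ZMod 2)) : Prop :=
  ∀ j₁ j₂ : Fin m, j₁ ≠ j₂ → pivotCol R j₁ ≠ ⊥ → pivotCol R j₂ ≠ ⊥ →
    pivotCol R j₁ ≠ pivotCol R j₂

theorem pivotCol_eq_bot_iff {m : ℕ} (R : Matrix (Fin m) (Fin m) (ZMod 2)) (j : Fin m) :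
    pivotCol R j = ⊥ ↔ ∀ i, R i j = 0 := by
  simp [pivotCol, Finset.max_eq_bot, Finset.filter_eq_empty_iff]

theorem le_pivotCol {m : ℕ} (R : Matrix (Fin m) (Fin m) (ZMod 2)) {i j : Fin m}
    (h : R i j ≠ 0) : (i : WithBot (Fin m)) ≤ pivotCol R j :=
  Finset.le_max (by simpa using h)

theorem ne_zero_of_pivotCol_eq {m : ℕ} (R : Matrix (Fin m) (Fin m) (ZMod 2)) {i j : Fin m}
    (h : pivotCol R j = i) : R i j ≠ 0 := by
  simpa using Finset.mem_of_max h

/-- A linear combination of columns of a reduced matrix has pivot at least that of every column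
occurring in it. -/
theorem pivotCol_le_mul {m : ℕ} {R : Matrix (Fin m) (Fin m) (ZMod 2)} (hR : IsReducedMat R)
    (U : Matrix (Fin m) (Fin m) (ZMod 2)) {k j : Fin m} (hU : U k j ≠ 0) :
    pivotCol R k ≤ pivotCol (R * U) j := by
  obtain ⟨q, hq, hmax⟩ := Finset.exists_max_image
    (Finset.univ.filter fun l => U l j ≠ 0) (pivotCol R) ⟨k, by simpa using hU⟩
  simp only [Finset.mem_filter, Finset.mem_univ, true_and] at hq hmax
  refine (hmax k hU).trans ?_
  rcases hp : pivotCol R q with _ | p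
  · exact bot_le
  change pivotCol R q = (p : WithBot (Fin m)) at hp
  apply le_pivotCol
  rw [Matrix.mul_apply, Finset.sum_eq_single q]
  · exact mul_ne_zero (ne_zero_of_pivotCol_eq R hp) hq
  · intro l _ hl
    by_contra hne
    -- A second column contributing to row `p` would also have pivot `p`.
    have hlp : pivotCol R l = pivotCol R q :=
      le_antisymm (hmax l (right_ne_zero_of_mul hne))
        (hp.trans_le (le_pivotCol R (left_ne_zero_of_mul hne)))
    have hbot : pivotCol R q ≠ ⊥ := by simp [hp]
    exact hR l q hl (hlp ▸ hbot) hbot hlp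
  · simp

theorem pivotCol_mul_le_mul {m : ℕ} {D V W : Matrix (Fin m) (Fin m) (ZMod 2)}
    (hV : IsUnit V) (hW : IsUnit W) (hVtri : V.BlockTriangular id) (hWtri : W.BlockTriangular id)
    (hR : IsReducedMat (D * V)) (j : Fin m) :
    pivotCol (D * V) j ≤ pivotCol (D * W) j := by
  have hVdet : IsUnit V.det := (Matrix.isUnit_iff_isUnit_det V).1 hV
  have hDW : D * V * (V⁻¹ * W) = D * W := by
    rw [Matrix.mul_assoc, Matrix.mul_nonsing_inv_cancel_left _ _ hVdet]
  have : Invertible V := hV.invertible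
  have htri : (V⁻¹ * W).BlockTriangular id :=
    (Matrix.blockTriangular_inv_of_blockTriangular hVtri).mul hWtri
  have hdet : (V⁻¹ * W).det ≠ 0 :=
    ((Matrix.isUnit_iff_isUnit_det _).1 ((Matrix.isUnit_nonsing_inv_iff.2 hV).mul hW)).ne_zero
  rw [Matrix.det_of_isUpperTriangular htri, Finset.prod_ne_zero_iff] at hdet
  rw [← hDW]
  exact pivotCol_le_mul hR _ (hdet j (Finset.mem_univ j))

/-- **Pairing lemma.** If `R₁ = D·V₁` and `R₂ = D·V₂` are reduced, with `V₁, V₂`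
invertible upper-triangular matrices over `𝔽₂`, then for every column `j` the column
of `R₁` is zero iff that of `R₂` is, and the pivot indices agree; i.e. the pivot
pairing of a reduced form of `D` obtained by left-to-right column operations is
independent of the reduction. -/
theorem pairing_lemma
    (m : ℕ) (D V₁ V₂ : Matrix (Fin m) (Fin m) (ZMod 2))
    (hV₁ : IsUnit V₁) (hV₂ : IsUnit V₂)
    (hV₁tri : V₁.BlockTriangular id) (hV₂tri : V₂.BlockTriangular id)
    (hR₁ : IsReducedMat (D * V₁)) (hR₂ : IsReducedMat (D * V₂)) (j : Fin m) :
    ((∀ i, (D * V₁) i j = 0) ↔ (∀ i, (D * V₂) i j = 0)) ∧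
    pivotCol (D * V₁) j = pivotCol (D * V₂) j := by
  have h : pivotCol (D * V₁) j = pivotCol (D * V₂) j :=
    le_antisymm (pivotCol_mul_le_mul hV₁ hV₂ hV₁tri hV₂tri hR₁ j)
      (pivotCol_mul_le_mul hV₂ hV₁ hV₂tri hV₁tri hR₂ j)
  exact ⟨by rw [← pivotCol_eq_bot_iff, ← pivotCol_eq_bot_iff, h], h⟩
end
end

section
/- Let h : ℝ → ℝ be a C¹ function, c ∈ ℝ², and define the radial Hamiltonian H : ℝ² → ℝ by H(x) = h(‖x − c‖²/2). For θ ∈ ℝ let R_θ : ℝ² → ℝ² be the counterclockwise rotation by angle θ, and let J = R_{π/2} (so J(a,b) = (−b,a)). Then the family of maps φᵗ(x) = R_{t·h′(‖x−c‖²/2)}(x − c) + c is the Hamiltonian flow of H: φ⁰ = id and for every t ∈ ℝ and x ∈ ℝ², (d/dt) φᵗ(x) = J·∇H(φᵗ(x)). -/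
/-! The gradient of `H(y) = h(‖y - c‖² / 2)` is `h'(‖y - c‖² / 2) • (y - c)`
(`hasGradientAt_radial`). A rotation about `c` preserves `‖y - c‖` (`norm_rot`), so along
`t ↦ φᵗ(x)` the factor `h'(‖y - c‖² / 2)` keeps its initial value `ω`, and the equation of motion
becomes `d/dt (e^{iωt} v) = i ω e^{iωt} v` with `v = x - c`. -/

noncomputable section

/-- Counterclockwise rotation of the plane `ℝ² ≅ ℂ` by angle `θ`:
`R_θ(v) = e^{iθ}·v` (so `R_{π/2} = J` with `J(a,b) = (−b,a)`, i.e. multiplication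
by `i`). -/
def rot (θ : ℝ) (v : ℂ) : ℂ := Complex.exp (θ * Complex.I) * v

theorem norm_rot (θ : ℝ) (v : ℂ) : ‖rot θ v‖ = ‖v‖ := by
  rw [rot, norm_mul, Complex.norm_exp_ofReal_mul_I, one_mul]

theorem hasGradientAt_radial {h : ℝ → ℝ} (c y : ℂ)
    (hh : DifferentiableAt ℝ h (‖y - c‖ ^ 2 / 2)) :
    HasGradientAt (fun z : ℂ => h (‖z - c‖ ^ 2 / 2))
      (deriv h (‖y - c‖ ^ 2 / 2) • (y - c)) y := by
  rw [hasGradientAt_iff_hasFDerivAt]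
  have h1 := (((hasFDerivAt_id y).sub_const c).norm_sq).mul_const (2⁻¹ : ℝ)
  have h2 := hh.hasDerivAt.comp_hasFDerivAt_of_eq y h1 (by simp [div_eq_mul_inv])
  refine (h2.congr_fderiv ?_).congr_of_eventuallyEq (.of_forall fun z => by
    simp [div_eq_mul_inv])
  ext v
  simp [InnerProductSpace.toDual_apply_apply, -Complex.inner, -Complex.real_smul]

/-- Uniform rotation with angular velocity `ω` solves `ż = i ω z`. -/
theorem hasDerivAt_rot (ω t : ℝ) (v : ℂ) :
    HasDerivAt (fun s : ℝ => rot (s * ω) v) (Complex.I * (ω • rot (t * ω) v)) t := by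
  have h1 : HasDerivAt (fun s : ℝ => ((s * ω : ℝ) : ℂ) * Complex.I) ((ω : ℂ) * Complex.I) t := by
    simpa using (((hasDerivAt_id t).mul_const ω).ofReal_comp).mul_const Complex.I
  refine (h1.cexp.mul_const v).congr_deriv ?_
  rw [rot, Complex.real_smul]
  ring

/-- **The flow of a radial Hamiltonian.** For `H(x) = h(‖x−c‖²/2)` on `ℝ² ≅ ℂ`, the
family `φᵗ(x) = R_{t·h′(‖x−c‖²/2)}(x − c) + c` satisfies `φ⁰ = id` and
`(d/dt)φᵗ(x) = J·∇H(φᵗ(x))`, i.e. it is the Hamiltonian flow of `H`. -/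
theorem radial_hamiltonian_flow
    (h : ℝ → ℝ) (hh : ContDiff ℝ 1 h) (c : ℂ) :
    (∀ x : ℂ, rot (0 * deriv h (‖x - c‖ ^ 2 / 2)) (x - c) + c = x) ∧
    (∀ (t : ℝ) (x : ℂ),
      HasDerivAt (fun s : ℝ => rot (s * deriv h (‖x - c‖ ^ 2 / 2)) (x - c) + c)
        (Complex.I * gradient (fun y : ℂ => h (‖y - c‖ ^ 2 / 2))
          (rot (t * deriv h (‖x - c‖ ^ 2 / 2)) (x - c) + c)) t) := by
  refine ⟨fun x => by simp [rot], fun t x => ?_⟩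
  rw [(hasGradientAt_radial c _ (hh.differentiable one_ne_zero _)).gradient,
    add_sub_cancel_right, norm_rot]
  exact (hasDerivAt_rot _ t _).add_const c
end
end

section
/- Let h : ℝ → ℝ be C² with |h′(s)| ≤ T and |h″(s)| ≤ T′ for all s, and h(s) = 0 for s > r (where r, T, T′ > 0), let c ∈ ℝ², and define φ : ℝ² → ℝ² by φ(x) = R_{h′(‖x−c‖²/2)}(x − c) + c, where R_θ is the counterclockwise rotation by angle θ. Then for every x ∈ ℝ², ‖Dφ(x) − Id‖_op ≤ √(2r)·(‖c‖ + √(2r))·T′ + T. -/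
/-!
Write `u = x - c`, `s = ‖u‖² / 2` and `θ = h′(s)`. The chain rule gives
`Dφ(x) v = e^{iθ} (v + h″(s) ⟪u, v⟫ i u)`, so that
`‖Dφ(x) v - v‖ ≤ |e^{iθ} - 1| ‖v‖ + |h″(s)| ‖u‖² ‖v‖ ≤ (T + |h″(s)| ‖u‖²) ‖v‖`.
If `s ≤ r` then `‖u‖² ≤ 2r` and `|h″(s)| ≤ T′`; if `s > r` then `h` vanishes near `s`, hence
`h″(s) = 0`. In both cases `|h″(s)| ‖u‖² ≤ 2r T′`, which is at most `√(2r) (‖c‖ + √(2r)) T′`.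
-/

noncomputable section

/-- The derivative of the radial twist `y ↦ R_{g(‖y-c‖²/2)}(y - c) + c`, evaluated on a vector. -/
theorem hasFDerivAt_radial_twist {g : ℝ → ℝ} (c x : ℂ)
    (hg : DifferentiableAt ℝ g (‖x - c‖ ^ 2 / 2)) :
    ∃ L : ℂ →L[ℝ] ℂ,
      HasFDerivAt (fun y : ℂ => rot (g (‖y - c‖ ^ 2 / 2)) (y - c) + c) L x ∧
      ∀ v : ℂ, L v = Complex.exp (g (‖x - c‖ ^ 2 / 2) * Complex.I) *
        (v + (deriv g (‖x - c‖ ^ 2 / 2) * inner ℝ (x - c) v : ℝ) * Complex.I * (x - c)) := by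
  have h_sub : HasFDerivAt (fun y : ℂ => y - c) (ContinuousLinearMap.id ℝ ℂ) x :=
    (hasFDerivAt_id x).sub_const c
  have h_sq := h_sub.norm_sq.const_mul (1 / 2 : ℝ)
  have h_s : (fun y : ℂ => (1 / 2 : ℝ) * ‖y - c‖ ^ 2) = fun y : ℂ => ‖y - c‖ ^ 2 / 2 := by
    ext y; ring
  rw [h_s] at h_sq
  have h_ang := hg.hasDerivAt.comp_hasFDerivAt x h_sq
  have h_exp := ((Complex.ofRealCLM.hasFDerivAt.comp x h_ang).mul_const Complex.I).cexp
  refine ⟨_, (h_exp.mul h_sub).add_const c, fun v => ?_⟩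
  simp
  ring

/-- The second derivative vanishes outside the support, so `|h″(s)| s ≤ r T′` for every `s ≥ 0`. -/
theorem abs_deriv_deriv_mul_le {r T' : ℝ} (hT' : 0 < T') (hr : 0 < r) {h : ℝ → ℝ}
    (hdd : ∀ s : ℝ, |deriv (deriv h) s| ≤ T') (hsupp : ∀ s : ℝ, r < s → h s = 0)
    {s : ℝ} (hs : 0 ≤ s) : |deriv (deriv h) s| * s ≤ T' * r := by
  rcases le_or_gt s r with hsr | hsr
  · exact mul_le_mul (hdd s) hsr hs hT'.le
  · have h_zero : h =ᶠ[nhds s] fun _ => (0 : ℝ) := by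
      filter_upwards [Ioi_mem_nhds hsr] with t ht using hsupp t ht
    have h_zero' : deriv (deriv h) s = 0 := by
      rw [h_zero.deriv.deriv_eq]
      simp
    rw [h_zero']
    simp only [abs_zero, zero_mul]
    positivity

/-- **`C¹`-distance of a radial Hamiltonian diffeomorphism from the identity.**
If `|h′| ≤ T`, `|h″| ≤ T′` everywhere, and `h(s) = 0` for `s > r`, then the map
`φ(x) = R_{h′(‖x−c‖²/2)}(x − c) + c` satisfies
`‖Dφ(x) − Id‖_op ≤ √(2r)·(‖c‖ + √(2r))·T′ + T` for all `x`. -/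
theorem radial_map_C1_close_to_id
    (r T T' : ℝ) (hr : 0 < r) (hT : 0 < T) (hT' : 0 < T')
    (h : ℝ → ℝ) (hh : ContDiff ℝ 2 h)
    (hd : ∀ s : ℝ, |deriv h s| ≤ T)
    (hdd : ∀ s : ℝ, |deriv (deriv h) s| ≤ T')
    (hsupp : ∀ s : ℝ, r < s → h s = 0)
    (c : ℂ) (x : ℂ) :
    ‖fderiv ℝ (fun y : ℂ => rot (deriv h (‖y - c‖ ^ 2 / 2)) (y - c) + c) x
        - ContinuousLinearMap.id ℝ ℂ‖
      ≤ Real.sqrt (2 * r) * (‖c‖ + Real.sqrt (2 * r)) * T' + T := by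
  have h_diff : Differentiable ℝ (deriv h) :=
    ((contDiff_succ_iff_deriv (n := 1)).1 hh).2.2.differentiable one_ne_zero
  obtain ⟨L, hL, hLv⟩ := hasFDerivAt_radial_twist c x (h_diff (‖x - c‖ ^ 2 / 2))
  rw [hL.fderiv]
  have h_sqrt : Real.sqrt (2 * r) * Real.sqrt (2 * r) = 2 * r :=
    Real.mul_self_sqrt (by positivity)
  have h_bound : 2 * r * T' + T ≤ Real.sqrt (2 * r) * (‖c‖ + Real.sqrt (2 * r)) * T' + T := by
    have h_nonneg : 0 ≤ Real.sqrt (2 * r) * ‖c‖ * T' := by positivity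
    nlinarith
  refine le_trans (ContinuousLinearMap.opNorm_le_bound _ (by positivity) fun v => ?_) h_bound
  have h_supp := abs_deriv_deriv_mul_le hT' hr hdd hsupp (s := ‖x - c‖ ^ 2 / 2) (by positivity)
  have h_T := hd (‖x - c‖ ^ 2 / 2)
  rw [sub_apply, hLv, ContinuousLinearMap.id_apply]
  set θ := deriv h (‖x - c‖ ^ 2 / 2)
  set k := deriv (deriv h) (‖x - c‖ ^ 2 / 2)
  set u := x - c
  have h_rot : ‖Complex.exp (θ * Complex.I) - 1‖ ≤ T := by
    rw [mul_comm]
    exact (Real.norm_exp_I_mul_ofReal_sub_one_le (x := θ)).trans h_T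
  have h_twist : ‖Complex.exp (θ * Complex.I) *
      ((k * inner ℝ u v : ℝ) * Complex.I * u)‖ ≤ 2 * r * T' * ‖v‖ := by
    rw [norm_mul, Complex.norm_exp_ofReal_mul_I, one_mul, norm_mul, norm_mul, Complex.norm_I,
      mul_one, Complex.norm_real, Real.norm_eq_abs, abs_mul]
    calc |k| * |inner ℝ u v| * ‖u‖ ≤ |k| * (‖u‖ * ‖v‖) * ‖u‖ := by
          gcongr
          exact abs_real_inner_le_norm u v
      _ = 2 * (|k| * (‖u‖ ^ 2 / 2)) * ‖v‖ := by ring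
      _ ≤ 2 * (T' * r) * ‖v‖ := by gcongr
      _ = 2 * r * T' * ‖v‖ := by ring
  calc ‖Complex.exp (θ * Complex.I) * (v + (k * inner ℝ u v : ℝ) * Complex.I * u) - v‖
      = ‖(Complex.exp (θ * Complex.I) - 1) * v + Complex.exp (θ * Complex.I) *
          ((k * inner ℝ u v : ℝ) * Complex.I * u)‖ := by
        congr 1
        ring
    _ ≤ ‖Complex.exp (θ * Complex.I) - 1‖ * ‖v‖ + 2 * r * T' * ‖v‖ := by
        refine (norm_add_le _ _).trans ?_
        rw [norm_mul (Complex.exp (θ * Complex.I) - 1) v]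
        gcongr
    _ ≤ T * ‖v‖ + 2 * r * T' * ‖v‖ := by gcongr
    _ = (2 * r * T' + T) * ‖v‖ := by ring
end
end

section
/- Let H : ℝ^{2n} → ℝ be a smooth function with G := sup_{z} ‖∇H(z)‖ < ∞, and let φᵗ be its Hamiltonian flow: φ⁰ = id and (d/dt) φᵗ(z) = X_H(φᵗ(z)) where X_H(q,p) = (∂H/∂p, −∂H/∂q); write φᵗ(q,p) = (Qᵗ(q,p), Pᵗ(q,p)). Assume D := sup_{t ∈ [0,1], z} ‖Dφᵗ(z) − Id‖_op < 1, and that for each t ∈ [0,1] and p ∈ ℝ^n the map q ↦ Qᵗ(q,p) is a bijection of ℝ^n with inverse q_{φᵗ}(·, p). Define S : ℝ^{2n} → ℝ by S(Q,p) = ∫₀¹ H(Q, Pᵗ(q_{φᵗ}(Q,p), p)) dt. Let m ∈ ℕ, m ≥ 1, let E ≥ 0, and for each k = 1,…,m let q̃_k : ℝ^{2n} → ℝ^n be a map satisfying ‖Q^{k/m}(q̃_k(Q,p), p) − Q‖ ≤ √E for all (Q,p), and define S̃(Q,p) = (1/m)·Σ_{k=1}^m H(Q, P^{k/m}(q̃_k(Q,p),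 p)). Then for all (Q,p) ∈ ℝ^{2n}: |S(Q,p) − S̃(Q,p)| ≤ (2G²/(1 − D))·(1/m) + (2G/(1 − D))·√E. -/
noncomputable section

/-!
The integrand `h t = H (Q, Pᵗ(q_t, p))`, with `Qᵗ(q_t, p) = Q`, is Lipschitz in `t`, and moves by
at most `G e / (1 - D)` when `q_t` is replaced by an inverse that is inexact by `e`.

Both facts come from one estimate. Since `q ↦ Qᵗ(q, p) - q` is `D`-Lipschitz, `q ↦ Qᵗ(q, p)`
expands distances by at least `1 - D`, while `q ↦ Pᵗ(q, p)` is `D`-Lipschitz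
(`fst_sub_id_lipschitz`, `snd_lipschitz`). The Hamiltonian vector field is bounded by `G`, so
`Qᵗ` and `Pᵗ` are `G`-Lipschitz in `t` (`flow_time_lipschitz`). Hence if `Qᵗ(a, p) = Q` and
`‖Qˢ(b, p) - Q‖ ≤ e`, then `‖a - b‖ ≤ (G |t - s| + e) / (1 - D)` and
`‖Pᵗ(a, p) - Pˢ(b, p)‖ ≤ G |t - s| + D (G |t - s| + e) / (1 - D) ≤ (G |t - s| + e) / (1 - D)`
(`momentum_error`). As `H` is `G`-Lipschitz in `p`, integrating the resulting bound over each
interval `[(k - 1)/m, k/m]` and summing (`riemann_sum_error`) gives the claim, with the constant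
`1` in place of `2`. The case `e = 0` shows that the integrand is continuous, hence integrable.
-/

/-- The mean value inequality along a segment. The bound `C` is allowed to have any sign, which
matters because a bound `D * ‖v‖` with `D < 0` is consistent when the space is trivial. -/
lemma mvt_segment {V W : Type*} [NormedAddCommGroup V] [NormedSpace ℝ V]
    [NormedAddCommGroup W] [NormedSpace ℝ W] {g : V → W} {g' : V → V →L[ℝ] W}
    (hg : ∀ x, HasFDerivAt g (g' x) x) {C : ℝ} (a b : V) (hb : ∀ x, ‖g' x (a - b)‖ ≤ C) :
    ‖g a - g b‖ ≤ C := by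
  have hline : ∀ s : ℝ, HasDerivAt (fun s : ℝ => g (b + s • (a - b)))
      (g' (b + s • (a - b)) (a - b)) s := by
    intro s
    have h1 : HasDerivAt (fun s : ℝ => b + s • (a - b)) (a - b) s := by
      simpa using ((hasDerivAt_id s).smul_const (a - b)).const_add b
    exact (hg _).comp_hasDerivAt s h1
  simpa using norm_image_sub_le_of_norm_deriv_le_segment_01'
    (fun s _ => (hline s).hasDerivWithinAt) (fun s _ => hb (b + s • (a - b)))

lemma left_le_of_sqrt_le {a b c : ℝ} (h : Real.sqrt (a ^ 2 + b ^ 2) ≤ c) : a ≤ c :=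
  (Real.le_sqrt_of_sq_le (by nlinarith [sq_nonneg b])).trans h

lemma right_le_of_sqrt_le {a b c : ℝ} (h : Real.sqrt (a ^ 2 + b ^ 2) ≤ c) : b ≤ c :=
  (Real.le_sqrt_of_sq_le (by nlinarith [sq_nonneg a])).trans h

section Space

variable {n : ℕ} {ψ : Vn n × Vn n → Vn n × Vn n} {D : ℝ}

lemma hasFDerivAt_comp_left (hψ : Differentiable ℝ ψ) (p q : Vn n) :
    HasFDerivAt (fun q => ψ (q, p))
      ((fderiv ℝ ψ (q, p)).comp (ContinuousLinearMap.inl ℝ (Vn n) (Vn n))) q :=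
  (hψ (q, p)).hasFDerivAt.comp q (hasFDerivAt_prodMk_left q p)

lemma fst_sub_id_lipschitz (hψ : Differentiable ℝ ψ)
    (hD : ∀ z v : Vn n × Vn n,
      Real.sqrt (‖(fderiv ℝ ψ z v).1 - v.1‖ ^ 2 + ‖(fderiv ℝ ψ z v).2 - v.2‖ ^ 2)
        ≤ D * Real.sqrt (‖v.1‖ ^ 2 + ‖v.2‖ ^ 2)) (p a b : Vn n) :
    ‖((ψ (a, p)).1 - a) - ((ψ (b, p)).1 - b)‖ ≤ D * ‖a - b‖ := by
  refine mvt_segment (g := fun q => (ψ (q, p)).1 - q)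
    (fun q => (hasFDerivAt_comp_left hψ p q).fst.sub (hasFDerivAt_id q)) a b fun q => ?_
  simpa using left_le_of_sqrt_le (hD (q, p) (a - b, 0))

lemma snd_lipschitz (hψ : Differentiable ℝ ψ)
    (hD : ∀ z v : Vn n × Vn n,
      Real.sqrt (‖(fderiv ℝ ψ z v).1 - v.1‖ ^ 2 + ‖(fderiv ℝ ψ z v).2 - v.2‖ ^ 2)
        ≤ D * Real.sqrt (‖v.1‖ ^ 2 + ‖v.2‖ ^ 2)) (p a b : Vn n) :
    ‖(ψ (a, p)).2 - (ψ (b, p)).2‖ ≤ D * ‖a - b‖ := by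
  refine mvt_segment (g := fun q => (ψ (q, p)).2)
    (fun q => (hasFDerivAt_comp_left hψ p q).snd) a b fun q => ?_
  simpa using right_le_of_sqrt_le (hD (q, p) (a - b, 0))

end Space

lemma flow_time_lipschitz {n : ℕ} {H : Vn n × Vn n → ℝ} {G : ℝ}
    (hG : ∀ z : Vn n × Vn n,
      Real.sqrt (‖gradient (fun q => H (q, z.2)) z.1‖ ^ 2
          + ‖gradient (fun p => H (z.1, p)) z.2‖ ^ 2) ≤ G)
    {φ : ℝ → Vn n × Vn n → Vn n × Vn n}
    (hflow : ∀ t ∈ Set.Icc (0 : ℝ) 1, ∀ z : Vn n × Vn n,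
      HasDerivAt (fun s => φ s z)
        (gradient (fun p => H ((φ t z).1, p)) (φ t z).2,
         -gradient (fun q => H (q, (φ t z).2)) (φ t z).1) t)
    {s t : ℝ} (hs : s ∈ Set.Icc (0 : ℝ) 1) (ht : t ∈ Set.Icc (0 : ℝ) 1) (z : Vn n × Vn n) :
    ‖φ t z - φ s z‖ ≤ G * |t - s| := by
  refine (convex_Icc (0 : ℝ) 1).norm_image_sub_le_of_norm_hasDerivWithin_le
    (fun u hu => (hflow u hu z).hasDerivWithinAt) (fun u _ => ?_) hs ht
  rw [Prod.norm_def, norm_neg]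
  exact max_le (right_le_of_sqrt_le (hG _)) (left_le_of_sqrt_le (hG _))

lemma hamiltonian_lipschitz_snd {n : ℕ} {H : Vn n × Vn n → ℝ} (hH : Differentiable ℝ H) {G : ℝ}
    (hG : ∀ z : Vn n × Vn n,
      Real.sqrt (‖gradient (fun q => H (q, z.2)) z.1‖ ^ 2
          + ‖gradient (fun p => H (z.1, p)) z.2‖ ^ 2) ≤ G)
    (Q a b : Vn n) : |H (Q, a) - H (Q, b)| ≤ G * ‖a - b‖ := by
  have hd : Differentiable ℝ fun p => H (Q, p) := by fun_prop
  refine convex_univ.norm_image_sub_le_of_norm_fderiv_le (f := fun p => H (Q, p)) (𝕜 := ℝ)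
    (fun x _ => hd x) (fun x _ => ?_) (Set.mem_univ b) (Set.mem_univ a)
  have h := right_le_of_sqrt_le (hG (Q, x))
  rwa [gradient, LinearIsometryEquiv.norm_map] at h

/-- Stability of the momentum under a change of time from `t` to `s` and an inversion error `e`
at time `s`. -/
lemma momentum_error {n : ℕ} {φ : ℝ → Vn n × Vn n → Vn n × Vn n} {G D : ℝ} (hD1 : D < 1)
    {s t : ℝ} (htime : ∀ z, ‖φ t z - φ s z‖ ≤ G * |t - s|)
    (hQ : ∀ p a b : Vn n, ‖((φ s (a, p)).1 - a) - ((φ s (b, p)).1 - b)‖ ≤ D * ‖a - b‖)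
    (hP : ∀ p a b : Vn n, ‖(φ s (a, p)).2 - (φ s (b, p)).2‖ ≤ D * ‖a - b‖)
    {Q p a b : Vn n} {e : ℝ} (ha : (φ t (a, p)).1 = Q) (hb : ‖(φ s (b, p)).1 - Q‖ ≤ e) :
    ‖(φ t (a, p)).2 - (φ s (b, p)).2‖ ≤ (G * |t - s| + e) / (1 - D) := by
  have h1 : ‖(φ t (a, p)).1 - (φ s (a, p)).1‖ ≤ G * |t - s| :=
    (norm_fst_le (φ t (a, p) - φ s (a, p))).trans (htime _)
  have h2 : ‖(φ t (a, p)).2 - (φ s (a, p)).2‖ ≤ G * |t - s| :=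
    (norm_snd_le (φ t (a, p) - φ s (a, p))).trans (htime _)
  have h3 : ‖(φ s (a, p)).1 - (φ s (b, p)).1‖ ≤ G * |t - s| + e := by
    have h : (φ s (a, p)).1 - (φ s (b, p)).1
        = -((φ t (a, p)).1 - (φ s (a, p)).1) - ((φ s (b, p)).1 - Q) := by rw [ha]; abel
    rw [h]
    refine (norm_sub_le _ _).trans ?_
    rw [norm_neg]
    exact add_le_add h1 hb
  have h4 : ‖a - b‖ ≤ G * |t - s| + e + D * ‖a - b‖ := by
    have h : a - b = ((φ s (a, p)).1 - (φ s (b, p)).1)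
        - (((φ s (a, p)).1 - a) - ((φ s (b, p)).1 - b)) := by abel
    calc ‖a - b‖ = ‖((φ s (a, p)).1 - (φ s (b, p)).1)
          - (((φ s (a, p)).1 - a) - ((φ s (b, p)).1 - b))‖ := by rw [← h]
      _ ≤ _ := (norm_sub_le _ _).trans (add_le_add h3 (hQ p a b))
  have h5 : ‖(φ t (a, p)).2 - (φ s (b, p)).2‖ ≤ G * |t - s| + D * ‖a - b‖ := by
    rw [← sub_add_sub_cancel _ (φ s (a, p)).2 _]
    exact (norm_add_le _ _).trans (add_le_add h2 (hP p a b))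
  have he : 0 ≤ e := (norm_nonneg _).trans hb
  have hg : 0 ≤ G * |t - s| := (norm_nonneg _).trans (htime (a, p))
  rw [le_div_iff₀ (by linarith)]
  rcases le_or_gt 0 D with hD0 | hD0
  · nlinarith [mul_le_mul_of_nonneg_left h4 hD0]
  · -- A negative `D` forces `Vn n` to be trivial.
    have htriv : ∀ x y : Vn n, x = y := fun x y => by
      have h := (norm_nonneg _).trans (hP p x y)
      rw [← sub_eq_zero, ← norm_eq_zero]
      exact le_antisymm (by nlinarith) (norm_nonneg _)
    rw [htriv (φ t (a, p)).2 (φ s (b, p)).2, sub_self, norm_zero, zero_mul]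
    exact add_nonneg hg he

/-- A Riemann sum over right endpoints, with inexact samples `c k` that are `C`-close to `h` on
the `k`-th interval (and on the `1 / m`-neighbourhood of its right endpoint). -/
lemma riemann_sum_error {h : ℝ → ℝ} (hc : ContinuousOn h (Set.Icc 0 1)) {m : ℕ} (hm : 1 ≤ m)
    (c : ℕ → ℝ) {C : ℝ}
    (hC : ∀ k ∈ Finset.Icc 1 m, ∀ t ∈ Set.Icc (0 : ℝ) 1, |t - (k : ℝ) / m| ≤ 1 / m →
      |h t - c k| ≤ C) :
    |(∫ t in (0 : ℝ)..1, h t) - (1 / m : ℝ) * ∑ k ∈ Finset.Icc 1 m, c k| ≤ C := by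
  have hm0 : (0 : ℝ) < m := by exact_mod_cast hm
  have hsub : ∀ k < m, Set.uIcc ((k : ℝ) / m) ((k + 1 : ℕ) / m) ⊆ Set.Icc 0 1 := by
    intro k hk
    have hk' : ((k + 1 : ℕ) : ℝ) ≤ m := by exact_mod_cast hk
    rw [Set.uIcc_of_le (by gcongr; simp)]
    exact Set.Icc_subset_Icc (by positivity) ((div_le_one hm0).2 hk')
  have hint : ∀ k < m, IntervalIntegrable h MeasureTheory.volume ((k : ℝ) / m)
      ((k + 1 : ℕ) / m) := fun k hk => (hc.mono (hsub k hk)).intervalIntegrable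
  have hsum := intervalIntegral.sum_integral_adjacent_intervals (a := fun k : ℕ => (k : ℝ) / m) hint
  simp only [Nat.cast_zero, zero_div, div_self hm0.ne'] at hsum
  have hreindex : ∑ k ∈ Finset.Icc 1 m, c k = ∑ k ∈ Finset.range m, c (k + 1) := by
    rw [Finset.range_eq_Ico, Finset.sum_Ico_add' c 0 m 1]
    rfl
  have hlen : ∀ k : ℕ, ((k + 1 : ℕ) : ℝ) / m - (k : ℝ) / m = 1 / m := by
    intro k; push_cast; ring
  have hpiece : ∀ k ∈ Finset.range m,
      |(∫ t in ((k : ℝ) / m)..((k + 1 : ℕ) / m), h t) - (1 / m : ℝ) * c (k + 1)| ≤ C * (1 / m) := by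
    intro k hk
    rw [Finset.mem_range] at hk
    have hconst : (1 / m : ℝ) * c (k + 1)
        = ∫ _ in ((k : ℝ) / m)..((k + 1 : ℕ) / m), c (k + 1) := by
      rw [intervalIntegral.integral_const, hlen, smul_eq_mul]
    rw [hconst, ← intervalIntegral.integral_sub (hint k hk) intervalIntegrable_const]
    have hb := intervalIntegral.norm_integral_le_of_norm_le_const
      (f := fun t => h t - c (k + 1)) (C := C) (a := (k : ℝ) / m) (b := (k + 1 : ℕ) / m) ?_
    · rwa [hlen, abs_of_pos (by positivity : (0 : ℝ) < 1 / m)] at hb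
    · intro t ht
      have ht' := Set.uIoc_subset_uIcc ht
      refine hC (k + 1) (Finset.mem_Icc.2 ⟨by omega, hk⟩) t (hsub k hk ht') ?_
      rw [← hlen k, abs_sub_comm, abs_of_nonneg] <;>
        · rw [Set.uIcc_of_le (by gcongr; simp)] at ht'
          linarith [ht'.1, ht'.2]
  rw [← hsum, hreindex, Finset.mul_sum, ← Finset.sum_sub_distrib]
  calc _ ≤ ∑ _k ∈ Finset.range m, C * (1 / m) :=
        (Finset.abs_sum_le_sum_abs _ _).trans (Finset.sum_le_sum hpiece)
    _ = C := by
        rw [Finset.sum_const, Finset.card_range, nsmul_eq_mul]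
        field_simp

/-- **Approximation of the generating function by a Riemann sum with inexact inverses.**
Let `φᵗ` be the Hamiltonian flow of an autonomous `H` with `‖∇H‖ ≤ G`, suppose
`‖Dφᵗ − Id‖_op ≤ D < 1` (Euclidean operator norm) for `t ∈ [0,1]`, and let
`S(Q,p) = ∫₀¹ H(Q, Pᵗ(q_{φᵗ}(Q,p),p)) dt`. If `q̃_k` solves the inverse problem at
time `k/m` up to error `√E`, then the Riemann-sum approximation
`S̃(Q,p) = (1/m)·Σ_k H(Q, P^{k/m}(q̃_k(Q,p),p))` satisfies
`|S − S̃| ≤ (2G²/(1−D))·(1/m) + (2G/(1−D))·√E`. -/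
theorem generating_function_numerical_approximation
    (n : ℕ) (H : Vn n × Vn n → ℝ) (hH : ContDiff ℝ (⊤ : ℕ∞) H)
    (G : ℝ)
    (hG : ∀ z : Vn n × Vn n,
      Real.sqrt (‖gradient (fun q => H (q, z.2)) z.1‖ ^ 2
          + ‖gradient (fun p => H (z.1, p)) z.2‖ ^ 2) ≤ G)
    (φ : ℝ → Vn n × Vn n → Vn n × Vn n)
    (hφ0 : ∀ z, φ 0 z = z)
    (hflow : ∀ t ∈ Set.Icc (0 : ℝ) 1, ∀ z : Vn n × Vn n,
      HasDerivAt (fun s => φ s z)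
        (gradient (fun p => H ((φ t z).1, p)) (φ t z).2,
         -gradient (fun q => H (q, (φ t z).2)) (φ t z).1) t)
    (hφdiff : ∀ t ∈ Set.Icc (0 : ℝ) 1, Differentiable ℝ (φ t))
    (D : ℝ) (hD1 : D < 1)
    (hD : ∀ t ∈ Set.Icc (0 : ℝ) 1, ∀ z v : Vn n × Vn n,
      Real.sqrt (‖(fderiv ℝ (φ t) z v).1 - v.1‖ ^ 2 + ‖(fderiv ℝ (φ t) z v).2 - v.2‖ ^ 2)
        ≤ D * Real.sqrt (‖v.1‖ ^ 2 + ‖v.2‖ ^ 2))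
    (hbij : ∀ t ∈ Set.Icc (0 : ℝ) 1, ∀ p : Vn n,
      Function.Bijective fun q => (φ t (q, p)).1)
    (qinv : ℝ → Vn n × Vn n → Vn n)
    (hqinv : ∀ t ∈ Set.Icc (0 : ℝ) 1, ∀ Q p : Vn n, (φ t (qinv t (Q, p), p)).1 = Q)
    (m : ℕ) (hm : 1 ≤ m) (E : ℝ) (hE : 0 ≤ E)
    (qt : ℕ → Vn n × Vn n → Vn n)
    (hqt : ∀ k ∈ Finset.Icc 1 m, ∀ Q p : Vn n,
      ‖(φ ((k : ℝ) / m) (qt k (Q, p), p)).1 - Q‖ ≤ Real.sqrt E)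
    (Q p : Vn n) :
    |(∫ t in (0 : ℝ)..1, H (Q, (φ t (qinv t (Q, p), p)).2))
        - (1 / m : ℝ) * ∑ k ∈ Finset.Icc 1 m, H (Q, (φ ((k : ℝ) / m) (qt k (Q, p), p)).2)|
      ≤ 2 * G ^ 2 / (1 - D) * (1 / m) + 2 * G / (1 - D) * Real.sqrt E := by
  have hG0 : 0 ≤ G := (Real.sqrt_nonneg _).trans (hG (Q, p))
  have hD' : 0 < 1 - D := by linarith
  have key : ∀ s ∈ Set.Icc (0 : ℝ) 1, ∀ t ∈ Set.Icc (0 : ℝ) 1, ∀ (b : Vn n) (e : ℝ),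
      ‖(φ s (b, p)).1 - Q‖ ≤ e →
      |H (Q, (φ t (qinv t (Q, p), p)).2) - H (Q, (φ s (b, p)).2)|
        ≤ G * ((G * |t - s| + e) / (1 - D)) := by
    intro s hs t ht b e hb
    refine (hamiltonian_lipschitz_snd (hH.differentiable (by simp)) hG _ _ _).trans ?_
    exact mul_le_mul_of_nonneg_left (momentum_error hD1 (flow_time_lipschitz hG hflow hs ht)
      (fst_sub_id_lipschitz (hφdiff s hs) (hD s hs)) (snd_lipschitz (hφdiff s hs) (hD s hs))
      (hqinv t ht Q p) hb) hG0
  have hcont : ContinuousOn (fun t => H (Q, (φ t (qinv t (Q, p), p)).2)) (Set.Icc 0 1) := by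
    refine (LipschitzOnWith.of_dist_le_mul
      (K := Real.toNNReal (G * G / (1 - D))) fun t ht s hs => ?_).continuousOn
    rw [Real.coe_toNNReal _ (by positivity), Real.dist_eq, Real.dist_eq]
    have h := key s hs t ht (qinv s (Q, p)) 0 (by simp [hqinv s hs Q p])
    convert h using 1
    ring
  refine (riemann_sum_error hcont hm (fun k => H (Q, (φ ((k : ℝ) / m) (qt k (Q, p), p)).2))
    (C := G * ((G * (1 / m) + Real.sqrt E) / (1 - D))) ?_).trans ?_
  · intro k hk t ht htk
    have hk' : (k : ℝ) ≤ m := by exact_mod_cast (Finset.mem_Icc.1 hk).2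
    refine (key _ ⟨by positivity, div_le_one_of_le₀ hk' (by positivity)⟩ t ht _ _
      (hqt k hk Q p)).trans ?_
    gcongr
  · have h1 : 0 ≤ G * ((G * (1 / m) + Real.sqrt E) / (1 - D)) := by positivity
    calc G * ((G * (1 / m) + Real.sqrt E) / (1 - D))
        ≤ 2 * (G * ((G * (1 / m) + Real.sqrt E) / (1 - D))) := by linarith
      _ = _ := by ring
end
end
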